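/- arXiv:dg-ga/9711015 — 8 statements merged into one kernel-verified Lean document; each statement's English description precedes it below -/
import Mathlib

section
/- For a sequence of diagonal matrices D_n = diag(d_n^1, …, d_n^d) with strictly positive entries, approximate stability coincides with stability: AS(0,(D_n)) = {v ∈ ℝ^d : sup_n ‖D_n v‖ < ∞}. -/
open Filter

/-- A vector `v` is approximately stable for the sequence of linear maps `(A n)`
if it is the limit of a sequence `(u n)` whose image sequence `(A n (u n))` is bounded. -/
def ApproxStable {d : ℕ} (A : ℕ → Matrix (Fin d) (Fin d) ℝ) (v : Fin d → ℝ) : Prop :=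
  ∃ u : ℕ → Fin d → ℝ, Tendsto u atTop (nhds v) ∧ ∃ C : ℝ, ∀ n, ‖(A n).mulVec (u n)‖ ≤ C

/-- For a sequence of diagonal matrices with strictly positive entries, approximate
stability coincides with stability. -/
theorem approxStable_diagonal_eq_stable {d : ℕ} (dd : ℕ → Fin d → ℝ)
    (hpos : ∀ n i, 0 < dd n i) :
    {v | ApproxStable (fun n => Matrix.diagonal (dd n)) v} =
      {v : Fin d → ℝ | ∃ C : ℝ, ∀ n, ‖(Matrix.diagonal (dd n)).mulVec v‖ ≤ C} := by
  ext v
  simp only [Set.mem_setOf_eq]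
  constructor
  · rintro ⟨u, hu, C, hC⟩
    have hC0 : 0 ≤ C := (norm_nonneg _).trans (hC 0)
    have hev : ∀ᶠ n in atTop, ∀ i, |v i| ≤ 2 * |u n i| := by
      rw [eventually_all]
      intro i
      have hi : Tendsto (fun n => |u n i|) atTop (nhds |v i|) :=
        ((tendsto_pi_nhds.1 hu) i).abs
      by_cases h : v i = 0
      · exact Eventually.of_forall fun n => by rw [h, abs_zero]; positivity
      · have hp : 0 < |v i| := abs_pos.2 h
        filter_upwards [hi.eventually (lt_mem_nhds (half_lt_self hp))] with n hn
        linarith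
    obtain ⟨N, hN⟩ := eventually_atTop.1 hev
    refine ⟨2 * C + ∑ m ∈ Finset.range N, ‖(Matrix.diagonal (dd m)).mulVec v‖, fun n => ?_⟩
    have hS : 0 ≤ ∑ m ∈ Finset.range N, ‖(Matrix.diagonal (dd m)).mulVec v‖ :=
      Finset.sum_nonneg fun _ _ => norm_nonneg _
    rcases lt_or_ge n N with h | h
    · have := Finset.single_le_sum
        (f := fun m => ‖(Matrix.diagonal (dd m)).mulVec v‖)
        (fun _ _ => norm_nonneg _) (Finset.mem_range.2 h)
      linarith
    · have h2 : ‖(Matrix.diagonal (dd n)).mulVec v‖ ≤ 2 * C := by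
        rw [pi_norm_le_iff_of_nonneg (by positivity)]
        intro i
        have h1 := (norm_le_pi_norm _ i).trans (hC n)
        rw [Matrix.mulVec_diagonal, Real.norm_eq_abs, abs_mul, abs_of_pos (hpos n i)] at h1 ⊢
        have := mul_le_mul_of_nonneg_left (hN n h i) (hpos n i).le
        linarith
      linarith
  · rintro ⟨C, hC⟩
    exact ⟨fun _ => v, tendsto_const_nhds, C, hC⟩
end

section
/- Let d ≥ 3 and let A be a real d×d matrix with det A = 1 that preserves the standard Lorentz quadratic form q(x) = −x₁² + x₂² + ⋯ + x_d². Then A can be written as A = L·D·R, where L and R belong to SO(d) (real special orthogonal matrices) and D = diag(λ, 1, …, 1, λ⁻¹) for some real number λ with 0 < λ ≤ 1. -/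
open Matrix

/-- The standard Lorentz quadratic form `q(x) = -x₁² + x₂² + ⋯ + x_d²` on `ℝ^d`. -/
def lorentzQ {d : ℕ} (x : Fin d → ℝ) : ℝ :=
  ∑ i : Fin d, (if (i : ℕ) = 0 then (-1 : ℝ) else 1) * x i ^ 2

theorem kak_exists_orth {n : ℕ} (f g : Fin (n+3) → ℝ) (hf : f ⬝ᵥ f = 1) (hg : g ⬝ᵥ g = 1)
    (hfg : f ⬝ᵥ g = 0) : ∃ (Q : Matrix (Fin (n+3)) (Fin (n+3)) ℝ) (e : ℝ), Qᵀ * Q = 1 ∧ Q.det = 1 ∧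
      (∀ i, Q i 0 = e * f i) ∧ (∀ i, Q i (Fin.last (n+2)) = g i) ∧ e * e = 1 := by
  have hl : (Fin.last (n+2)) ≠ 0 := (Fin.last_pos).ne'
  let v : Fin (n+3) → EuclideanSpace ℝ (Fin (n+3)) := fun i =>
    if i = 0 then WithLp.toLp 2 f else WithLp.toLp 2 g
  have hv : Orthonormal ℝ (({0, Fin.last (n+2)} : Set (Fin (n+3))).domRestrict v) := by
    rw [orthonormal_iff_ite]
    have hgf : g ⬝ᵥ f = 0 := by rw [dotProduct_comm]; exact hfg
    rintro ⟨i, hi⟩ ⟨j, hj⟩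
    change inner ℝ (v i) (v j) = _
    simp only [Subtype.mk.injEq]
    rcases hi with rfl | hi <;> rcases hj with rfl | hj
    · simp only [v, if_true, EuclideanSpace.inner_toLp_toLp, star_trivial, hf]
    · cases hj; simp only [v, if_true, if_neg hl, if_neg hl.symm, EuclideanSpace.inner_toLp_toLp, star_trivial, hgf]
    · cases hi; simp only [v, if_true, if_neg hl, EuclideanSpace.inner_toLp_toLp, star_trivial, hfg]
    · cases hi; cases hj; simp only [v, if_true, if_neg hl, EuclideanSpace.inner_toLp_toLp, star_trivial, hg]
  obtain ⟨b, hb⟩ := hv.exists_orthonormalBasis_extension_of_card_eq (by simp)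
  let Q : Matrix (Fin (n+3)) (Fin (n+3)) ℝ := Matrix.of fun i j => b j i
  have hQ : Qᵀ * Q = 1 := by
    ext i j
    have := (orthonormal_iff_ite.1 b.orthonormal) j i
    rw [PiLp.inner_apply] at this
    simp only [mul_apply, transpose_apply, one_apply, Q, of_apply]
    simp only [RCLike.inner_apply, conj_trivial] at this
    rw [this]; simp only [eq_comm]
  have h0 : ∀ i, Q i 0 = f i := fun i => by
    simp [Q, hb 0 (by simp), v]
  have h1 : ∀ i, Q i (Fin.last (n+2)) = g i := fun i => by
    simp [Q, hb (Fin.last (n+2)) (by simp), v, hl]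
  have hd : Q.det * Q.det = 1 := by
    have := congrArg Matrix.det hQ
    simpa using this
  let E : Matrix (Fin (n+3)) (Fin (n+3)) ℝ := diagonal (Function.update 1 0 Q.det)
  have hEE : E * E = 1 := by
    simp only [E, diagonal_mul_diagonal]
    rw [← diagonal_one]; congr 1; ext i
    by_cases h : i = 0
    · subst h; simp [hd]
    · simp [h]
  refine ⟨Q * E, Q.det, ?_, ?_, ?_, ?_, hd⟩
  · have hET : Eᵀ = E := diagonal_transpose _
    rw [transpose_mul, hET, Matrix.mul_assoc, ← Matrix.mul_assoc Qᵀ, hQ, Matrix.one_mul, hEE]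
  · rw [det_mul, det_diagonal, Finset.prod_update_of_mem (Finset.mem_univ _)]
    simp [hd]
  · intro i; simp [E, mul_diagonal, h0, mul_comm]
  · intro i; simp [E, mul_diagonal, h1, hl]

theorem kak_gram {n : ℕ} (A : Matrix (Fin (n+3)) (Fin (n+3)) ℝ)
    (hA : ∀ x : Fin (n+3) → ℝ, lorentzQ (A.mulVec x) = lorentzQ x) :
    (∀ x, Aᵀ *ᵥ (A *ᵥ x) = x - (2 * x 0) • Pi.single 0 1 + (2 * (A 0 ⬝ᵥ x)) • A 0) ∧
    A 0 ⬝ᵥ A 0 = 2 * A 0 0 ^ 2 - 1 := by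
  let J : Matrix (Fin (n+3)) (Fin (n+3)) ℝ := diagonal (fun i => if (i:ℕ) = 0 then -1 else 1)
  have hJv : ∀ x : Fin (n+3) → ℝ, J *ᵥ x = x - (2 * x 0) • Pi.single 0 1 := by
    intro x; ext i
    by_cases h : i = 0
    · subst h; simp [J, mulVec_diagonal]; ring
    · simp [J, mulVec_diagonal, h]
  have hq : ∀ x : Fin (n+3) → ℝ, lorentzQ x = x ⬝ᵥ (J *ᵥ x) := by
    intro x; simp only [lorentzQ, dotProduct, J, mulVec_diagonal]
    exact Finset.sum_congr rfl fun i _ => by ring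
  have hJs : ∀ x y : Fin (n+3) → ℝ, y ⬝ᵥ (J *ᵥ x) = x ⬝ᵥ (J *ᵥ y) := by
    intro x y; simp only [dotProduct, J, mulVec_diagonal]
    exact Finset.sum_congr rfl fun i _ => by ring
  have hB : ∀ x y : Fin (n+3) → ℝ, (A *ᵥ x) ⬝ᵥ (J *ᵥ (A *ᵥ y)) = x ⬝ᵥ (J *ᵥ y) := by
    intro x y
    have h1 := hA (x + y)
    have h2 := hA x
    have h3 := hA y
    simp only [hq, mulVec_add, dotProduct_add, add_dotProduct] at h1 h2 h3
    have h4 := hJs x y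
    have h5 := hJs (A *ᵥ x) (A *ᵥ y)
    linarith
  have hM : Aᵀ * (J * A) = J := by
    apply Matrix.ext_of_mulVec_single
    intro j
    apply dotProduct_eq
    intro x
    rw [dotProduct_comm _ x, dotProduct_comm _ x, ← hB, ← mulVec_mulVec, ← mulVec_mulVec, dotProduct_mulVec, vecMul_transpose]
  have hJJ : J * J = 1 := by
    simp only [J, diagonal_mul_diagonal]
    rw [← diagonal_one]; congr 1; ext i; split_ifs <;> simp
  have hr : ∀ x, (A *ᵥ x) 0 = A 0 ⬝ᵥ x := fun x => rfl
  constructor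
  · intro x
    have h : Aᵀ *ᵥ (J *ᵥ (A *ᵥ x)) = J *ᵥ x := by
      rw [mulVec_mulVec, mulVec_mulVec, Matrix.mul_assoc, hM]
    rw [hJv (A *ᵥ x), mulVec_sub, mulVec_smul, hJv, hr] at h
    rw [← h]
    have : Aᵀ *ᵥ (Pi.single 0 1) = A 0 := by ext i; simp
    rw [this]; simp
  · have h1 : (J * Aᵀ * J) * A = 1 := by
      rw [Matrix.mul_assoc, Matrix.mul_assoc, hM, hJJ]
    have h2 := mul_eq_one_comm.1 h1
    have h3 : A * J * Aᵀ = J := by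
      calc A * J * Aᵀ = A * (J * Aᵀ * J) * J := by
            simp only [Matrix.mul_assoc]; rw [hJJ, Matrix.mul_one]
        _ = J := by rw [h2, Matrix.one_mul]
    have h4 : A 0 ⬝ᵥ (J *ᵥ A 0) = -1 := by
      have := congrFun (congrFun h3 0) 0
      rw [Matrix.mul_assoc, mul_apply] at this
      simp only [dotProduct, mulVec_diagonal, J, diagonal_mul, transpose_apply] at this ⊢
      rw [this]; simp
    rw [hJv, dotProduct_sub, dotProduct_smul] at h4
    simp at h4
    linarith

theorem kak_unit {n : ℕ} (r : Fin (n+3) → ℝ) : ∃ (u : Fin (n+3) → ℝ) (s : ℝ),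
    u 0 = 0 ∧ u ⬝ᵥ u = 1 ∧ r = r 0 • Pi.single 0 1 + s • u ∧ 0 ≤ r 0 * s := by
  suffices h : ∃ (u : Fin (n+3) → ℝ) (s : ℝ),
      u 0 = 0 ∧ u ⬝ᵥ u = 1 ∧ r = r 0 • Pi.single 0 1 + s • u by
    obtain ⟨u, s, h1, h2, h3⟩ := h
    rcases le_total 0 (r 0 * s) with h | h
    · exact ⟨u, s, h1, h2, h3, h⟩
    · exact ⟨-u, -s, by simp [h1], by simp [h2], by simpa using h3, by linarith⟩
  let b : Fin (n+3) → ℝ := r - r 0 • Pi.single 0 1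
  have hb0 : b 0 = 0 := by simp [b]
  by_cases hb : b = 0
  · exact ⟨Pi.single 1 1, 0, by simp, by simp, by simpa [b, sub_eq_zero] using hb⟩
  · have hp : 0 < b ⬝ᵥ b := by
      refine lt_of_le_of_ne (Finset.sum_nonneg fun i _ => mul_self_nonneg _) (Ne.symm ?_)
      simpa using hb
    have hs := Real.sqrt_pos.2 hp
    have hss := Real.mul_self_sqrt hp.le
    set s := √(b ⬝ᵥ b)
    refine ⟨s⁻¹ • b, s, by simp [hb0], ?_, ?_⟩
    · rw [smul_dotProduct, dotProduct_smul, ← hss]; simp; field_simp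
    · rw [smul_smul, mul_inv_cancel₀ hs.ne']; simp [b]

theorem kak_aux {n : ℕ} (A : Matrix (Fin (n+3)) (Fin (n+3)) ℝ) (hdet : A.det = 1)
    (hA : ∀ x : Fin (n+3) → ℝ, lorentzQ (A.mulVec x) = lorentzQ x) :
    ∃ (Q : Matrix (Fin (n+3)) (Fin (n+3)) ℝ) (l : ℝ), 0 < l ∧ l ≤ 1 ∧ Qᵀ * Q = 1 ∧ Q.det = 1 ∧
      ∀ j, Aᵀ *ᵥ (A *ᵥ Q.col j) =
        (if (j : ℕ) = 0 then l else if (j : ℕ) = n + 3 - 1 then l⁻¹ else 1)^2 • Q.col j := by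
  obtain ⟨hS, hr⟩ := kak_gram A hA
  obtain ⟨u, s, hu0, huu, hru, has⟩ := kak_unit (A 0)
  set r := A 0
  set a := r 0
  set e0 : Fin (n+3) → ℝ := Pi.single 0 1
  have he0 : e0 0 = 1 := by simp [e0]
  have hee : e0 ⬝ᵥ e0 = 1 := by simp [e0]
  have heu : e0 ⬝ᵥ u = 0 := by simp [e0, hu0]
  have hue : u ⬝ᵥ e0 = 0 := by simp [e0, hu0]
  have hrr : a ^ 2 - s ^ 2 = 1 := by
    rw [hru] at hr
    simp [hee, heu, hue, huu] at hr
    nlinarith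
  have hre : r ⬝ᵥ e0 = a := by rw [hru]; simp [hee, hue]
  have hru' : r ⬝ᵥ u = s := by rw [hru]; simp [heu, huu]
  have h2 : √2⁻¹ * √2⁻¹ = (2⁻¹ : ℝ) := Real.mul_self_sqrt (by norm_num)
  set c := √(2⁻¹ : ℝ)
  obtain ⟨Q, e, hQ, hQd, hQ0, hQl, he⟩ := kak_exists_orth (c • (e0 - u)) (c • (e0 + u))
    (by simp [hee, heu, hue, huu]; linarith)
    (by simp [hee, heu, hue, huu]; linarith)
    (by simp [hee, heu, hue, huu])
  have hlm : (a - s) * (a + s) = 1 := by linarith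
  have hinv : (a - s)⁻¹ = a + s := inv_eq_of_mul_eq_one_right hlm
  have hne : a - s ≠ 0 := left_ne_zero_of_mul_eq_one hlm
  have hq0 : Q.col 0 = (e * c) • (e0 - u) := by
    ext i; rw [col_apply, hQ0]; simp [mul_assoc]
  have hql : Q.col (Fin.last _) = c • (e0 + u) := by
    ext i; rw [col_apply, hQl]
  have hcol : ∀ i j, Q.col i ⬝ᵥ Q.col j = if i = j then 1 else 0 := by
    intro i j
    have := congrFun (congrFun hQ i) j
    rw [one_apply] at this
    rw [← this]; rfl
  have hc : c ≠ 0 := by intro h; rw [h] at h2; norm_num at h2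
  have hene : e ≠ 0 := by intro h; rw [h] at he; norm_num at he
  refine ⟨Q, |a - s|, abs_pos.2 hne, ?_, hQ, hQd, ?_⟩
  · rw [← sq_le_one_iff_abs_le_one]
    by_contra! h
    nlinarith
  · intro j
    by_cases h0 : j = 0
    · subst h0
      rw [hq0, mulVec_smul, mulVec_smul, hS, smul_comm]
      congr 1
      rw [dotProduct_sub, hre, hru']
      simp only [Fin.val_zero, if_true, sq_abs]
      rw [hru]; ext i
      simp [he0, hu0]
      linear_combination (u i + e0 i) * hrr
    by_cases hl : j = Fin.last _
    · subst hl
      rw [hql, mulVec_smul, mulVec_smul, hS, smul_comm]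
      congr 1
      rw [dotProduct_add, hre, hru', ← abs_inv, hinv]
      simp only [Fin.val_last]
      rw [if_neg (by omega), if_pos (by omega), sq_abs]
      rw [hru]; ext i
      simp [he0, hu0]
      linear_combination (-u i + e0 i) * hrr
    · have k0 := hcol 0 j
      have k1 := hcol (Fin.last _) j
      rw [if_neg (Ne.symm h0), hq0] at k0
      rw [if_neg (Ne.symm hl), hql] at k1
      simp only [smul_dotProduct, sub_dotProduct, add_dotProduct, smul_eq_mul, mul_eq_zero, hc, hene, false_or] at k0 k1
      have m0 : e0 ⬝ᵥ Q.col j = 0 := by linarith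
      have m1 : u ⬝ᵥ Q.col j = 0 := by linarith
      have m2 : r ⬝ᵥ Q.col j = 0 := by rw [hru]; simp only [add_dotProduct, smul_dotProduct, m0, m1]; simp
      have m3 : Q.col j 0 = 0 := by rw [← m0]; simp [e0]
      have hj0 : (j:ℕ) ≠ 0 := fun h => h0 (Fin.ext h)
      have hjl : (j:ℕ) ≠ n + 3 - 1 := fun h => hl (Fin.ext h)
      rw [hS, m2, m3, if_neg hj0, if_neg hjl]; simp

/-- Any unimodular matrix preserving the standard Lorentz form can be written as
`L * D * R` with `L, R ∈ SO(d)` and `D = diag(λ, 1, …, 1, λ⁻¹)` for some `0 < λ ≤ 1`. -/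
theorem lorentz_KAK_decomposition {d : ℕ} (hd : 3 ≤ d)
    (A : Matrix (Fin d) (Fin d) ℝ) (hdet : A.det = 1)
    (hA : ∀ x : Fin d → ℝ, lorentzQ (A.mulVec x) = lorentzQ x) :
    ∃ (L R : Matrix (Fin d) (Fin d) ℝ) (l : ℝ),
      L * L.transpose = 1 ∧ L.det = 1 ∧
      R * R.transpose = 1 ∧ R.det = 1 ∧
      0 < l ∧ l ≤ 1 ∧
      A = L * Matrix.diagonal
          (fun i : Fin d => if (i : ℕ) = 0 then l else if (i : ℕ) = d - 1 then l⁻¹ else 1) * R := by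
  obtain ⟨n, rfl⟩ : ∃ n, d = n + 3 := ⟨d - 3, by omega⟩
  obtain ⟨Q, l, hl, hl1, hQ, hQd, hcol⟩ := kak_aux A hdet hA
  set w : Fin (n+3) → ℝ :=
    fun i => if (i : ℕ) = 0 then l else if (i : ℕ) = n + 3 - 1 then l⁻¹ else 1 with hw
  have hwpos : ∀ i, 0 < w i := by
    intro i; simp only [hw]; split_ifs
    · exact hl
    · exact inv_pos.2 hl
    · exact one_pos
  let W : Matrix (Fin (n+3)) (Fin (n+3)) ℝ := diagonal (fun i => (w i)⁻¹)
  have hWW : W * diagonal w = 1 := by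
    simp only [W, diagonal_mul_diagonal]
    rw [← diagonal_one]; congr 1; ext i; exact inv_mul_cancel₀ (hwpos i).ne'
  have hWT : Wᵀ = W := diagonal_transpose _
  have hQ' : Q * Qᵀ = 1 := mul_eq_one_comm.1 hQ
  have hSQ : Aᵀ * (A * Q) = Q * (diagonal w * diagonal w) := by
    ext i j
    have := congrFun (hcol j) i
    rw [diagonal_mul_diagonal, mul_diagonal]
    rw [mulVec_mulVec] at this
    rw [← Matrix.mul_assoc]
    refine Eq.trans this ?_
    simp only [Pi.smul_apply, smul_eq_mul, col_apply, hw]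
    ring
  have hL : (A * Q * W)ᵀ * (A * Q * W) = 1 := by
    calc (A * Q * W)ᵀ * (A * Q * W) = W * (Qᵀ * (Aᵀ * (A * Q))) * W := by
          simp only [transpose_mul, hWT, Matrix.mul_assoc]
      _ = W * diagonal w * (diagonal w * W) := by
          rw [hSQ, ← Matrix.mul_assoc Qᵀ, hQ, Matrix.one_mul]; simp only [Matrix.mul_assoc]
      _ = 1 := by rw [hWW, mul_eq_one_comm.1 hWW, Matrix.one_mul]
  refine ⟨A * Q * W, Qᵀ, l, mul_eq_one_comm.1 hL, ?_, ?_, ?_, hl, hl1, ?_⟩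
  · have h1 := congrArg Matrix.det hL
    rw [det_mul, det_transpose, det_one] at h1
    have h2 : 0 < (A * Q * W).det := by
      rw [det_mul, det_mul, hdet, hQd, det_diagonal]
      simp only [one_mul]
      exact Finset.prod_pos fun i _ => inv_pos.2 (hwpos i)
    nlinarith
  · rw [transpose_transpose]; exact hQ
  · rw [det_transpose]; exact hQd
  · rw [Matrix.mul_assoc (A * Q), hWW, Matrix.mul_one, Matrix.mul_assoc, hQ', Matrix.mul_one]
end

section
/- Let (A_n) be a sequence of linear maps of ℝ^d (d ≥ 3) each preserving the standard Lorentz form q, and suppose (A_n) is divergent, i.e. the operator norms ‖A_n‖ are unbounded. Then there is a subsequence (B_n), and a nonzero isotropic vector u ∈ ℝ^d, such that: (i) the approximately stable set AS(0,(B_n)) equals the q-orthogonal hyperplane u^⊥ = {v : ⟨u,v⟩ = 0}, a lightlike hyperplane (the restriction of q to it is degenerate); and (ii) the set of strongly approximately stable vectors of (B_n) equals the one-dimensional isotropic line ℝu = (AS(0,(B_n)))^⊥. -/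
open Filter

/-- The polar bilinear form of the standard Lorentz quadratic form. -/
def lorentzB {d : ℕ} (x y : Fin d → ℝ) : ℝ :=
  ∑ i : Fin d, (if (i : ℕ) = 0 then (-1 : ℝ) else 1) * x i * y i

/-- `v` is strongly approximately stable for `(A n)` if it is the limit of a sequence
`(u n)` with `A n (u n) → 0`. -/
def StronglyApproxStable {d : ℕ} (A : ℕ → Matrix (Fin d) (Fin d) ℝ) (v : Fin d → ℝ) : Prop :=
  ∃ u : ℕ → Fin d → ℝ, Tendsto u atTop (nhds v) ∧
    Tendsto (fun n => (A n).mulVec (u n)) atTop (nhds 0)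

/-- signs -/
def lsg {d : ℕ} (i : Fin d) : ℝ := if (i : ℕ) = 0 then (-1 : ℝ) else 1

theorem lsg_sq {d : ℕ} (i : Fin d) : lsg i * lsg i = 1 := by
  unfold lsg; split_ifs <;> norm_num

theorem lQ_eq {d : ℕ} (x : Fin d → ℝ) : lorentzQ x = ∑ i, lsg i * x i ^ 2 := rfl

theorem lB_eq {d : ℕ} (x y : Fin d → ℝ) : lorentzB x y = ∑ i, lsg i * x i * y i := rfl

theorem lQ_lin {d : ℕ} (x y : Fin d → ℝ) (c : ℝ) :
    lorentzQ (x + c • y) = lorentzQ x + 2 * c * lorentzB y x + c ^ 2 * lorentzQ y := by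
  simp only [lQ_eq, lB_eq, Finset.mul_sum, ← Finset.sum_add_distrib]
  refine Finset.sum_congr rfl fun i _ => ?_
  simp only [Pi.add_apply, Pi.smul_apply, smul_eq_mul]
  ring

theorem sum_sq_eq {d : ℕ} (z : Fin d) (hz : (z : ℕ) = 0) (x : Fin d → ℝ) :
    ∑ i, x i ^ 2 = lorentzQ x + 2 * x z ^ 2 := by
  have h : 2 * x z ^ 2 = ∑ i, if i = z then 2 * x i ^ 2 else 0 := by simp
  rw [h, lQ_eq, ← Finset.sum_add_distrib]
  refine Finset.sum_congr rfl fun i _ => ?_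
  have : i = z ↔ (i : ℕ) = 0 := by rw [Fin.ext_iff, hz]
  unfold lsg
  by_cases h0 : (i : ℕ) = 0
  · rw [if_pos h0, if_pos (this.2 h0)]; ring
  · rw [if_neg h0, if_neg (fun h => h0 (this.1 h))]; ring

theorem cont_lQ {d : ℕ} : Continuous (lorentzQ : (Fin d → ℝ) → ℝ) := by
  unfold lorentzQ; fun_prop

theorem norm_sq_le {d : ℕ} (x : Fin d → ℝ) : ‖x‖ ^ 2 ≤ ∑ i, x i ^ 2 := by
  have h0 : 0 ≤ ∑ i, x i ^ 2 := Finset.sum_nonneg fun i _ => sq_nonneg _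
  have : ‖x‖ ≤ Real.sqrt (∑ i, x i ^ 2) := by
    rw [pi_norm_le_iff_of_nonneg (Real.sqrt_nonneg _)]
    intro i
    apply Real.le_sqrt_of_sq_le
    rw [Real.norm_eq_abs, sq_abs]
    exact Finset.single_le_sum (f := fun i => x i ^ 2) (fun i _ => sq_nonneg _) (Finset.mem_univ i)
  calc ‖x‖ ^ 2 ≤ (Real.sqrt (∑ i, x i ^ 2)) ^ 2 := by gcongr
    _ = _ := Real.sq_sqrt h0

theorem sum_sq_le {d : ℕ} (x : Fin d → ℝ) : ∑ i, x i ^ 2 ≤ d * ‖x‖ ^ 2 := by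
  calc ∑ i, x i ^ 2 ≤ ∑ _i : Fin d, ‖x‖ ^ 2 := by
        refine Finset.sum_le_sum fun i _ => ?_
        rw [← sq_abs]
        have := norm_le_pi_norm x i
        rw [Real.norm_eq_abs] at this
        gcongr
    _ = _ := by simp

theorem lQ_le {d : ℕ} (x : Fin d → ℝ) : lorentzQ x ≤ d * ‖x‖ ^ 2 := by
  refine le_trans ?_ (sum_sq_le x)
  rw [lQ_eq]
  refine Finset.sum_le_sum fun i _ => ?_
  have := sq_nonneg (x i)
  unfold lsg; split_ifs <;> linarith

theorem dot_sq_le {d : ℕ} (a x : Fin d → ℝ) : (a ⬝ᵥ x) ^ 2 ≤ (d * ‖a‖ ^ 2) * (d * ‖x‖ ^ 2) := by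
  have := Finset.sum_mul_sq_le_sq_mul_sq Finset.univ a x
  refine le_trans this ?_
  have h1 := sum_sq_le a
  have h2 := sum_sq_le x
  have h0 : 0 ≤ ∑ i, x i ^ 2 := Finset.sum_nonneg fun i _ => sq_nonneg _
  gcongr

theorem mulVec_sq_le {d : ℕ} (z : Fin d) (hz : (z : ℕ) = 0) (M : Matrix (Fin d) (Fin d) ℝ)
    (hM : ∀ x, lorentzQ (M.mulVec x) = lorentzQ x) (x : Fin d → ℝ) :
    ‖M.mulVec x‖ ^ 2 ≤ lorentzQ x + 2 * (M z ⬝ᵥ x) ^ 2 := by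
  have := norm_sq_le (M.mulVec x)
  rw [sum_sq_eq z hz, hM] at this
  exact this

theorem row_q {d : ℕ} (z : Fin d) (hz : (z : ℕ) = 0) (M : Matrix (Fin d) (Fin d) ℝ)
    (hM : ∀ x, lorentzQ (M.mulVec x) = lorentzQ x) : lorentzQ (M z) = -1 := by
  have hB : ∀ x y, lorentzB (M.mulVec x) (M.mulVec y) = lorentzB x y := by
    intro x y
    have h := hM (y + (1 : ℝ) • x)
    rw [Matrix.mulVec_add, Matrix.mulVec_smul, lQ_lin, lQ_lin, hM, hM] at h
    linarith
  set J : Matrix (Fin d) (Fin d) ℝ := Matrix.diagonal lsg with hJ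
  have hJJ : J * J = 1 := by
    rw [hJ, Matrix.diagonal_mul_diagonal, ← Matrix.diagonal_one]
    congr 1; funext i; exact lsg_sq i
  have h1 : M.transpose * J * M = J := by
    ext i j
    have h := hB (Pi.single i 1) (Pi.single j 1)
    simp only [Matrix.mulVec_single_one, lB_eq] at h
    have e1 : (M.transpose * J * M) i j = ∑ k, lsg k * M k i * M k j := by
      rw [Matrix.mul_apply]
      refine Finset.sum_congr rfl fun k _ => ?_
      rw [hJ, Matrix.mul_diagonal, Matrix.transpose_apply]; ring
    rw [e1]
    refine Eq.trans h ?_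
    rw [hJ, Matrix.diagonal_apply]
    by_cases hij : i = j
    · subst hij
      simp [Pi.single_apply]
    · have hji : ¬ j = i := fun h => hij h.symm
      simp [Pi.single_apply, hij, hji]
  have h2 : (J * M.transpose * J) * M = 1 := by
    calc _ = J * (M.transpose * J * M) := by simp only [Matrix.mul_assoc]
      _ = 1 := by rw [h1, hJJ]
  have h3 := mul_eq_one_comm.1 h2
  have h4 : M * J * M.transpose = J := by
    calc M * J * M.transpose = M * J * M.transpose * (J * J) := by rw [hJJ, mul_one]
      _ = (M * (J * M.transpose * J)) * J := by simp only [Matrix.mul_assoc]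
      _ = J := by rw [h3, one_mul]
  have h5 := congrFun (congrFun h4 z) z
  rw [Matrix.mul_apply] at h5
  rw [lQ_eq]
  have e : J z z = -1 := by simp [hJ, lsg, hz]
  rw [e] at h5
  rw [← h5]
  refine Finset.sum_congr rfl fun k _ => ?_
  rw [hJ, Matrix.mul_diagonal, Matrix.transpose_apply]; ring

theorem exists_subseq {d : ℕ} (a : ℕ → Fin d → ℝ) (h : ¬ ∃ C : ℝ, ∀ n, ‖a n‖ ≤ C) :
    ∃ (φ : ℕ → ℕ) (α : Fin d → ℝ), StrictMono φ ∧ α ≠ 0 ∧ (∀ n, 0 < ‖a (φ n)‖) ∧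
      Tendsto (fun n => ‖a (φ n)‖⁻¹) atTop (nhds 0) ∧
      Tendsto (fun n => ‖a (φ n)‖⁻¹ • a (φ n)) atTop (nhds α) := by
  have hf : ∀ n : ℕ, ∃ᶠ k in atTop, (n : ℝ) < ‖a k‖ := by
    intro n hn
    apply h
    have hb : IsBoundedUnder (· ≤ ·) atTop (fun k => ‖a k‖) :=
      ⟨n, by simpa using hn⟩
    obtain ⟨C, hC⟩ := hb.bddAbove_range
    exact ⟨C, fun k => hC ⟨k, rfl⟩⟩
  obtain ⟨φ, hφ, hφ'⟩ := extraction_forall_of_frequently hf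
  have hpos : ∀ n, 0 < ‖a (φ n)‖ := fun n => lt_of_le_of_lt (Nat.cast_nonneg n) (hφ' n)
  have hs : ∀ n, ‖a (φ n)‖⁻¹ • a (φ n) ∈ Metric.sphere (0 : Fin d → ℝ) 1 := by
    intro n
    rw [mem_sphere_zero_iff_norm, norm_smul, norm_inv, norm_norm, inv_mul_cancel₀ (hpos n).ne']
  obtain ⟨α, hα, ψ, hψ, hl⟩ := (isCompact_sphere (0 : Fin d → ℝ) 1).tendsto_subseq hs
  refine ⟨φ ∘ ψ, α, hφ.comp hψ, ?_, fun n => hpos _, ?_, hl⟩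
  · rintro rfl
    simp at hα
  · have ht : Tendsto (fun n => ‖a (φ n)‖) atTop atTop :=
      tendsto_atTop_mono (fun n => (hφ' n).le) tendsto_natCast_atTop_atTop
    exact (tendsto_inv_atTop_zero.comp ht).comp hψ.tendsto_atTop

theorem proj_seq {d : ℕ} (b : ℕ → Fin d → ℝ) (α v : Fin d → ℝ) (hα : α ≠ 0)
    (hb0 : ∀ n, b n ≠ 0)
    (hb : Tendsto b atTop (nhds α)) (hv : α ⬝ᵥ v = 0) :
    ∃ x : ℕ → Fin d → ℝ, Tendsto x atTop (nhds v) ∧ ∀ n, b n ⬝ᵥ x n = 0 := by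
  refine ⟨fun n => v - ((b n ⬝ᵥ v) / (b n ⬝ᵥ b n)) • b n, ?_, fun n => ?_⟩
  · have h1 : Tendsto (fun n => b n ⬝ᵥ v) atTop (nhds (α ⬝ᵥ v)) :=
      ((Continuous.dotProduct continuous_id continuous_const).tendsto α).comp hb
    have h2 : Tendsto (fun n => b n ⬝ᵥ b n) atTop (nhds (α ⬝ᵥ α)) :=
      ((Continuous.dotProduct continuous_id continuous_id).tendsto α).comp hb
    have h3 : α ⬝ᵥ α ≠ 0 := fun h => hα (dotProduct_self_eq_zero.1 h)
    have := (tendsto_const_nhds (x := v)).sub ((h1.div h2 h3).smul hb)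
    simpa [hv] using this
  · have h3 : b n ⬝ᵥ b n ≠ 0 := fun h => hb0 n (dotProduct_self_eq_zero.1 h)
    rw [dotProduct_sub, dotProduct_smul, smul_eq_mul, div_mul_cancel₀ _ h3, sub_self]

/-- A divergent sequence of linear Lorentz transformations has a subsequence whose
approximately stable set is a lightlike hyperplane `u^⊥` (with `u` a nonzero isotropic
vector), whose strongly approximately stable set is the isotropic line `ℝu = (u^⊥)^⊥`. -/
theorem lorentz_divergent_subsequence {d : ℕ} (hd : 3 ≤ d)
    (A : ℕ → Matrix (Fin d) (Fin d) ℝ)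
    (hA : ∀ n (x : Fin d → ℝ), lorentzQ ((A n).mulVec x) = lorentzQ x)
    (hdiv : ¬ ∃ C : ℝ, ∀ n (v : Fin d → ℝ), ‖(A n).mulVec v‖ ≤ C * ‖v‖) :
    ∃ (φ : ℕ → ℕ) (u : Fin d → ℝ), StrictMono φ ∧ u ≠ 0 ∧ lorentzQ u = 0 ∧
      {v | ApproxStable (fun n => A (φ n)) v} = {v | lorentzB u v = 0} ∧
      (∃ w : Fin d → ℝ, w ≠ 0 ∧ lorentzB u w = 0 ∧
        ∀ v : Fin d → ℝ, lorentzB u v = 0 → lorentzB w v = 0) ∧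
      {v | StronglyApproxStable (fun n => A (φ n)) v} = {v : Fin d → ℝ | ∃ c : ℝ, v = c • u} := by
  set z : Fin d := ⟨0, by omega⟩ with hzdef
  have hz : (z : ℕ) = 0 := rfl
  have hunb : ¬ ∃ C : ℝ, ∀ n, ‖A n z‖ ≤ C := by
    rintro ⟨C, hC⟩
    apply hdiv
    refine ⟨Real.sqrt (d + 2 * (d * C ^ 2 * d)), fun n v => ?_⟩
    have h1 := mulVec_sq_le z hz (A n) (hA n) v
    have h2 := lQ_le v
    have h3 := dot_sq_le (A n z) v
    have h4 : (d * ‖A n z‖ ^ 2) * (d * ‖v‖ ^ 2) ≤ (d * C ^ 2) * (d * ‖v‖ ^ 2) := by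
      have := hC n
      gcongr
    apply (sq_le_sq₀ (norm_nonneg _) (by positivity)).1
    rw [mul_pow, Real.sq_sqrt (by positivity)]
    nlinarith
  obtain ⟨φ, α, hφ, hα0, hpos, hinv, hlim⟩ := exists_subseq (fun n => A n z) hunb
  set b : ℕ → Fin d → ℝ := fun n => ‖A (φ n) z‖⁻¹ • A (φ n) z with hb
  have hb0 : ∀ n, b n ≠ 0 := fun n =>
    smul_ne_zero (inv_ne_zero (hpos n).ne') (norm_pos_iff.1 (hpos n))
  have hqα : lorentzQ α = 0 := by
    have h1 := (cont_lQ.tendsto α).comp hlim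
    have h2 : ∀ n, lorentzQ (b n) = ‖A (φ n) z‖⁻¹ ^ 2 * (-1) := by
      intro n
      have := lQ_lin 0 (A (φ n) z) (‖A (φ n) z‖⁻¹)
      rw [zero_add] at this
      rw [hb]
      simp only
      rw [this, row_q z hz _ (hA _)]
      simp [lQ_eq, lB_eq]
    have h3 : Tendsto (fun n => ‖A (φ n) z‖⁻¹ ^ 2 * (-1 : ℝ)) atTop (nhds (0 ^ 2 * (-1))) :=
      (hinv.pow 2).mul_const _
    have h4 := tendsto_nhds_unique (h1.congr h2) h3
    simpa using h4
  set u : Fin d → ℝ := fun i => lsg i * α i with hu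
  have hBu : ∀ v, lorentzB u v = α ⬝ᵥ v := by
    intro v
    rw [lB_eq]
    refine Finset.sum_congr rfl fun i _ => ?_
    rw [hu]
    simp only
    rw [← mul_assoc, lsg_sq, one_mul]
  have hqu : lorentzQ u = 0 := by
    rw [← hqα]
    refine Finset.sum_congr rfl fun i _ => ?_
    rw [hu]
    simp only
    rw [mul_pow, pow_two (lsg i), lsg_sq, one_mul]
  have hBuu : lorentzB u u = 0 := by
    rw [← hqu]
    refine Finset.sum_congr rfl fun i _ => ?_
    ring
  have hu0 : u ≠ 0 := by
    intro h
    apply hα0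
    funext i
    have h1 := congrFun h i
    have h2 : lsg i * (lsg i * α i) = 0 := by
      have : lsg i * α i = 0 := h1
      rw [this, mul_zero]
    rwa [← mul_assoc, lsg_sq, one_mul] at h2
  have huz : u z ≠ 0 := by
    intro h
    apply hu0
    have h1 := norm_sq_le u
    rw [sum_sq_eq z hz, hqu, h] at h1
    have : ‖u‖ = 0 := by nlinarith [norm_nonneg u]
    exact norm_eq_zero.1 this
  have hAS : ∀ v, ApproxStable (fun n => A (φ n)) v → lorentzB u v = 0 := by
    rintro v ⟨x, hx, C, hC⟩
    rw [hBu]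
    have h1 : Tendsto (fun n => b n ⬝ᵥ x n) atTop (nhds (α ⬝ᵥ v)) :=
      ((Continuous.dotProduct continuous_fst continuous_snd).tendsto (α, v)).comp
        (hlim.prodMk_nhds hx)
    have h2 : Tendsto (fun n => b n ⬝ᵥ x n) atTop (nhds 0) := by
      apply squeeze_zero_norm (a := fun n => ‖A (φ n) z‖⁻¹ * C)
      · intro n
        rw [hb]
        simp only
        rw [smul_dotProduct, smul_eq_mul, norm_mul, norm_inv, norm_norm]
        have := (norm_le_pi_norm ((A (φ n)).mulVec (x n)) z).trans (hC n)
        gcongr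
        exact this
      · simpa using hinv.mul_const C
    exact tendsto_nhds_unique h1 h2
  have hex : ∀ v, lorentzB u v = 0 → ∃ x : ℕ → Fin d → ℝ, Tendsto x atTop (nhds v) ∧
      ∀ n, ‖(A (φ n)).mulVec (x n)‖ ^ 2 ≤ lorentzQ (x n) := by
    intro v hv
    rw [hBu] at hv
    obtain ⟨x, hx, h0⟩ := proj_seq b α v hα0 hb0 hlim hv
    refine ⟨x, hx, fun n => ?_⟩
    have h1 := mulVec_sq_le z hz _ (hA (φ n)) (x n)
    have h2 : A (φ n) z ⬝ᵥ x n = 0 := by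
      have := h0 n
      rw [hb] at this
      simp only at this
      rw [smul_dotProduct, smul_eq_mul] at this
      exact (mul_eq_zero.1 this).resolve_left (inv_ne_zero (hpos n).ne')
    rw [h2] at h1
    linarith
  refine ⟨φ, u, hφ, hu0, hqu, ?_, ⟨u, hu0, hBuu, fun v h => h⟩, ?_⟩
  · ext v
    refine ⟨hAS v, fun hv => ?_⟩
    obtain ⟨x, hx, hn⟩ := hex v hv
    refine ⟨x, hx, ?_⟩
    obtain ⟨C, hC⟩ := ((cont_lQ.tendsto v).comp hx).bddAbove_range
    refine ⟨Real.sqrt C, fun n => Real.le_sqrt_of_sq_le ((hn n).trans (hC ⟨n, rfl⟩))⟩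
  · ext v
    constructor
    · rintro ⟨x, hx, h0⟩
      have hv : lorentzB u v = 0 := by
        apply hAS
        obtain ⟨C, hC⟩ := h0.norm.bddAbove_range
        exact ⟨x, hx, C, fun n => hC ⟨n, rfl⟩⟩
      have hq : lorentzQ v = 0 := by
        have h1 := (cont_lQ.tendsto v).comp hx
        have h2 := (cont_lQ.tendsto 0).comp h0
        have h3 := tendsto_nhds_unique h1 (h2.congr fun n => hA (φ n) (x n))
        rw [h3]
        simp [lQ_eq]
      refine ⟨v z / u z, ?_⟩
      have h1 := norm_sq_le (v + (-(v z / u z)) • u)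
      rw [sum_sq_eq z hz, lQ_lin, hq, hv, hqu] at h1
      have h2 : (v + (-(v z / u z)) • u) z = 0 := by
        simp only [Pi.add_apply, Pi.smul_apply, smul_eq_mul]
        field_simp
        ring
      rw [h2] at h1
      have h3 : ‖v + (-(v z / u z)) • u‖ = 0 := by
        nlinarith [norm_nonneg (v + (-(v z / u z)) • u)]
      have h4 := norm_eq_zero.1 h3
      rw [neg_smul, ← sub_eq_add_neg, sub_eq_zero] at h4
      exact h4
    · rintro ⟨c, rfl⟩
      have hB : lorentzB u (c • u) = 0 := by
        rw [hBu, dotProduct_smul, ← hBu, hBuu, smul_zero]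
      have hq : lorentzQ (c • u) = 0 := by
        have := lQ_lin 0 u c
        rw [zero_add, hqu] at this
        rw [this]
        simp [lQ_eq, lB_eq]
      obtain ⟨x, hx, hn⟩ := hex _ hB
      refine ⟨x, hx, ?_⟩
      have h1 := (cont_lQ.tendsto _).comp hx
      rw [hq] at h1
      have h2 := h1.sqrt
      rw [Real.sqrt_zero] at h2
      exact squeeze_zero_norm (fun n => Real.le_sqrt_of_sq_le (hn n)) h2
end

section
/- Let A_n be the 3×3 real matrix with rows (1, n, n²/2), (0, 1, n), (0, 0, 1) (i.e. A_n = exp(nN) for the nilpotent matrix N with N e₁ = 0, N e₂ = e₁, N e₃ = e₂). Then the approximately stable space of the sequence (A_n) is AS(0,(A_n)) = span{e₁, e₂}: every vector of span{e₁,e₂} is a limit of a sequence (v_n) with (A_n v_n) bounded, while no vector outside span{e₁,e₂} has this property. -/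
open Filter

/-- For the fundamental unipotent example `A_n = exp(nN)`, the approximately stable
space is the span of the first two basis vectors. -/
theorem approxStable_fundamental_example :
    {v | ApproxStable
        (fun n : ℕ => !![(1 : ℝ), (n : ℝ), (n : ℝ) ^ 2 / 2; 0, 1, (n : ℝ); 0, 0, 1]) v} =
      (Submodule.span ℝ {(Pi.single 0 1 : Fin 3 → ℝ), (Pi.single 1 1 : Fin 3 → ℝ)} :
        Submodule ℝ (Fin 3 → ℝ)) := by
  ext v
  simp only [Set.mem_setOf_eq, SetLike.mem_coe, Submodule.mem_span_pair]
  constructor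
  · rintro ⟨u, hu, C, hC⟩
    rw [tendsto_pi_nhds] at hu
    have h1 : ∀ n : ℕ, |u n 1 + n * u n 2| ≤ C := by
      intro n
      have h := (norm_le_pi_norm _ (1 : Fin 3)).trans (hC n)
      simpa [Matrix.mulVec, dotProduct, Fin.sum_univ_three] using h
    have hi : Tendsto (fun n : ℕ => ((n : ℝ))⁻¹) atTop (nhds 0) :=
      tendsto_inv_atTop_nhds_zero_nat
    have h2 : Tendsto (fun n : ℕ => (u n 1 + n * u n 2) * (n : ℝ)⁻¹) atTop (nhds 0) := by
      apply squeeze_zero_norm (a := fun n : ℕ => C * (n : ℝ)⁻¹)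
      · intro n
        rw [norm_mul, Real.norm_eq_abs, Real.norm_of_nonneg (by positivity)]
        exact mul_le_mul_of_nonneg_right (h1 n) (by positivity)
      · simpa using hi.const_mul C
    have h3 : Tendsto (fun n : ℕ => u n 2) atTop (nhds 0) := by
      have h4 := h2.sub ((hu 1).mul hi)
      simp only [mul_zero, sub_zero] at h4
      refine h4.congr' ?_
      filter_upwards [eventually_gt_atTop 0] with n hn
      have : (n : ℝ) ≠ 0 := by positivity
      field_simp
      ring
    have h5 : v 2 = 0 := tendsto_nhds_unique (hu 2) h3
    refine ⟨v 0, v 1, ?_⟩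
    ext i
    fin_cases i <;> simp [h5]
  · rintro ⟨a, b, rfl⟩
    refine ⟨fun n => ![a, b, -2 * b * (n : ℝ)⁻¹], ?_, |a| + 2 * |b|, ?_⟩
    · rw [tendsto_pi_nhds]
      have hi : Tendsto (fun n : ℕ => ((n : ℝ))⁻¹) atTop (nhds 0) :=
        tendsto_inv_atTop_nhds_zero_nat
      intro i
      fin_cases i
      · simp
      · simp
      · simpa using hi.const_mul (-2 * b)
    · intro n
      have ha := abs_nonneg a
      have hb := abs_nonneg b
      rw [pi_norm_le_iff_of_nonneg (by positivity)]
      rcases Nat.eq_zero_or_pos n with rfl | hn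
      · intro i
        fin_cases i <;> simp [Matrix.mulVec, dotProduct, Fin.sum_univ_three] <;> linarith
      · have h0 : (n : ℝ) ≠ 0 := by positivity
        have hn1 : (n : ℝ)⁻¹ ≤ 1 := inv_le_one_of_one_le₀ (by exact_mod_cast hn)
        intro i
        fin_cases i
        · have : a + n * b + (n : ℝ) ^ 2 / 2 * (-2 * b * (n : ℝ)⁻¹) = a := by
            field_simp
            ring
          simp only [Matrix.mulVec, dotProduct, Fin.sum_univ_three]
          simp at this ⊢
          rw [this]
          linarith
        · have : b + n * (-2 * b * (n : ℝ)⁻¹) = -b := by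
            field_simp
            ring
          simp only [Matrix.mulVec, dotProduct, Fin.sum_univ_three]
          simp at this ⊢
          rw [this, abs_neg]
          linarith
        · simp [Matrix.mulVec, dotProduct, Fin.sum_univ_three, abs_mul]
          nlinarith
end

section
/- Let (b_n) and (c_n) be real sequences tending to +∞. Let B_n be the 3×3 matrix with rows (1, b_n, b_n²/2), (0, 1, −b_n), (0, 0, 1), let C_n = diag(c_n, 1, c_n⁻¹), and set A_n = C_n B_n. Then e₁ is strongly approximately stable for (A_n): there exists a sequence u_n → e₁ with A_n u_n → 0; nevertheless A_n(e₁) = c_n e₁, so ‖A_n e₁‖ → ∞. -/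
open Filter

/-- "Chaos" example: for `A_n = C_n B_n` with `B_n` unipotent and `C_n` hyperbolic,
`e₁` is strongly approximately stable although `A_n e₁ = c_n e₁` blows up. -/
theorem chaos_example (b c : ℕ → ℝ)
    (hb : Tendsto b atTop atTop) (hc : Tendsto c atTop atTop) :
    let B : ℕ → Matrix (Fin 3) (Fin 3) ℝ :=
      fun n => !![1, b n, (b n) ^ 2 / 2; 0, 1, -(b n); 0, 0, 1]
    let C : ℕ → Matrix (Fin 3) (Fin 3) ℝ :=
      fun n => Matrix.diagonal ![c n, 1, (c n)⁻¹]
    let A : ℕ → Matrix (Fin 3) (Fin 3) ℝ := fun n => C n * B n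
    StronglyApproxStable A (Pi.single 0 1 : Fin 3 → ℝ) ∧
      (∀ n, (A n).mulVec (Pi.single 0 1 : Fin 3 → ℝ) = c n • (Pi.single 0 1 : Fin 3 → ℝ)) ∧
      Tendsto (fun n => ‖(A n).mulVec (Pi.single 0 1 : Fin 3 → ℝ)‖) atTop atTop := by
  intro B C A
  have hA : ∀ n (x y z : ℝ), (A n).mulVec ![x, y, z] =
      ![c n * (x + b n * y + b n ^ 2 / 2 * z), y - b n * z, (c n)⁻¹ * z] := by
    intro n x y z
    simp only [A, ← Matrix.mulVec_mulVec]
    ext i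
    fin_cases i <;>
      simp [B, C, Matrix.mulVec_diagonal, Matrix.mulVec, dotProduct, Fin.sum_univ_three,
        Matrix.diagonal_apply] <;> ring
  have he : (Pi.single 0 1 : Fin 3 → ℝ) = ![1, 0, 0] := by
    ext i; fin_cases i <;> simp
  have hE : ∀ n, (A n).mulVec (Pi.single 0 1 : Fin 3 → ℝ)
      = c n • (Pi.single 0 1 : Fin 3 → ℝ) := by
    intro n
    rw [he, hA]
    ext i; fin_cases i <;> simp
  have hbi : Tendsto (fun n => (b n)⁻¹) atTop (nhds 0) := tendsto_inv_atTop_zero.comp hb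
  have hci : Tendsto (fun n => (c n)⁻¹) atTop (nhds 0) := tendsto_inv_atTop_zero.comp hc
  have hy : Tendsto (fun n => -(2/3) * (b n)⁻¹) atTop (nhds 0) := by
    simpa using hbi.const_mul (-(2/3))
  have hz : Tendsto (fun n => -(2/3) * ((b n)⁻¹) ^ 2) atTop (nhds 0) := by
    simpa using (hbi.pow 2).const_mul (-(2/3))
  refine ⟨⟨fun n => ![1, -(2/3) * (b n)⁻¹, -(2/3) * ((b n)⁻¹) ^ 2], ?_, ?_⟩, hE, ?_⟩
  · rw [he, tendsto_pi_nhds]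
    intro i
    fin_cases i
    · exact tendsto_const_nhds
    · exact hy
    · exact hz
  · have h3 : Tendsto (fun n => (c n)⁻¹ * (-(2/3) * ((b n)⁻¹) ^ 2)) atTop (nhds 0) := by
      simpa using hci.mul hz
    have hlim : Tendsto (fun n => (![0, 0, (c n)⁻¹ * (-(2/3) * ((b n)⁻¹) ^ 2)] : Fin 3 → ℝ))
        atTop (nhds 0) := by
      rw [tendsto_pi_nhds]
      intro i
      fin_cases i
      · exact tendsto_const_nhds
      · exact tendsto_const_nhds
      · exact h3
    refine hlim.congr' ?_
    filter_upwards [hb.eventually_gt_atTop 0] with n hn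
    have hn' : b n ≠ 0 := hn.ne'
    rw [hA]
    have e1 : c n * (1 + b n * (-(2/3) * (b n)⁻¹) + b n ^ 2 / 2 * (-(2/3) * ((b n)⁻¹) ^ 2))
        = 0 := by
      field_simp
      ring
    have e2 : -(2/3) * (b n)⁻¹ - b n * (-(2/3) * ((b n)⁻¹) ^ 2) = 0 := by
      field_simp
      ring
    rw [e1, e2]
  · have h : ∀ n, c n ≤ ‖(A n).mulVec (Pi.single 0 1 : Fin 3 → ℝ)‖ := by
      intro n
      have h0 := norm_le_pi_norm ((A n).mulVec (Pi.single 0 1 : Fin 3 → ℝ)) 0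
      refine le_trans ?_ h0
      rw [hE]
      simpa using le_abs_self (c n)
    exact tendsto_atTop_mono h hc
end

section
/- (Calabi–Markus phenomenon, basic fact.) Let q ≥ 2, let Q be the Lorentz quadratic form Q(x) = −x₁² + x₂² + ⋯ + x_{q+1}² on ℝ^{1+q}, and let K = {x ∈ ℝ^{1+q} : Q(x) = 1 and x₁ = 0}. Then for every linear map h of ℝ^{1+q} preserving Q, one has h(K) ∩ K ≠ ∅. -/
lemma exists_unit_orth (u v : ℝ) : ∃ a b : ℝ, a ^ 2 + b ^ 2 = 1 ∧ u * a + v * b = 0 := by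
  by_cases hz : u ^ 2 + v ^ 2 = 0
  · have hu : u = 0 := by nlinarith [sq_nonneg u, sq_nonneg v]
    have hv : v = 0 := by nlinarith [sq_nonneg u, sq_nonneg v]
    exact ⟨1, 0, by norm_num, by simp [hu]⟩
  · have hs : Real.sqrt (u ^ 2 + v ^ 2) ^ 2 = u ^ 2 + v ^ 2 := Real.sq_sqrt (by positivity)
    refine ⟨-v / Real.sqrt (u ^ 2 + v ^ 2), u / Real.sqrt (u ^ 2 + v ^ 2), ?_, by ring⟩
    rw [div_pow, div_pow, hs, ← add_div, div_eq_one_iff_eq hz]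
    ring

/-- Calabi–Markus phenomenon, basic fact: with `K` the trace of the de Sitter space
`{Q = 1}` on the spacelike hyperplane `{x₁ = 0}`, every linear map preserving `Q`
satisfies `h(K) ∩ K ≠ ∅`. -/
theorem calabi_markus {q : ℕ} (hq : 2 ≤ q)
    (h : Matrix (Fin (q + 1)) (Fin (q + 1)) ℝ)
    (hQ : ∀ x : Fin (q + 1) → ℝ, lorentzQ (h.mulVec x) = lorentzQ x) :
    ∃ x : Fin (q + 1) → ℝ,
      (lorentzQ x = 1 ∧ x 0 = 0) ∧ (lorentzQ (h.mulVec x) = 1 ∧ (h.mulVec x) 0 = 0) := by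
  obtain ⟨n, rfl⟩ : ∃ n, q = n + 2 := ⟨q - 2, by omega⟩
  obtain ⟨a, b, hab, h0⟩ := exists_unit_orth (h 0 (Fin.succ 0)) (h 0 (Fin.succ (Fin.succ 0)))
  let x : Fin (n + 2 + 1) → ℝ := Fin.cons 0 (Fin.cons a (Fin.cons b (fun _ => 0)))
  have hx : lorentzQ x = 1 := by
    unfold lorentzQ
    rw [Fin.sum_univ_succ, Fin.sum_univ_succ, Fin.sum_univ_succ]
    simp only [x, Fin.cons_zero, Fin.cons_succ, Fin.val_succ, Nat.succ_ne_zero, if_false]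
    simpa using hab
  refine ⟨x, ⟨hx, rfl⟩, (hQ x).trans hx, ?_⟩
  unfold Matrix.mulVec dotProduct
  rw [Fin.sum_univ_succ, Fin.sum_univ_succ, Fin.sum_univ_succ]
  simp only [x, Fin.cons_zero, Fin.cons_succ, mul_zero, Finset.sum_const_zero, add_zero, zero_add]
  exact h0
end

section
/- Let q ≥ 2 and equip ℝ^{2+q} with the quadratic form Q(x) = −x₁² − x₂² + x₃² + ⋯ + x_{q+2}², with polar form ⟨·,·⟩. For a nonzero isotropic vector u, set H_u = {x : Q(x) = −1 and ⟨u, x⟩ = 0}. Then for nonzero isotropic vectors u and v, the sets H_u and H_v are disjoint if and only if ⟨u, v⟩ = 0 and u, v are not collinear. -/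
/-- The quadratic form of signature `(2,q)`:
`Q(x) = -x₁² - x₂² + x₃² + ⋯ + x_{q+2}²` on `ℝ^{2+q}`. -/
def adsQ {q : ℕ} (x : Fin (q + 2) → ℝ) : ℝ :=
  ∑ i : Fin (q + 2), (if (i : ℕ) < 2 then (-1 : ℝ) else 1) * x i ^ 2

/-- The polar bilinear form of `adsQ`. -/
def adsB {q : ℕ} (x y : Fin (q + 2) → ℝ) : ℝ :=
  ∑ i : Fin (q + 2), (if (i : ℕ) < 2 then (-1 : ℝ) else 1) * x i * y i

/-- The lightlike geodesic hypersurface `H_u = u^⊥ ∩ {Q = -1}` of anti-de Sitter space,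
for `u` a nonzero isotropic vector. -/
def adsH {q : ℕ} (u : Fin (q + 2) → ℝ) : Set (Fin (q + 2) → ℝ) :=
  {x | adsQ x = -1 ∧ adsB u x = 0}

theorem adsB_lin {q : ℕ} (a : ℝ) (x y z : Fin (q + 2) → ℝ) :
    adsB (a • x + y) z = a * adsB x z + adsB y z := by
  unfold adsB
  rw [Finset.mul_sum, ← Finset.sum_add_distrib]
  refine Finset.sum_congr rfl fun i _ => ?_
  simp only [Pi.add_apply, Pi.smul_apply, smul_eq_mul]
  ring

theorem adsB_symm {q : ℕ} (x y : Fin (q + 2) → ℝ) : adsB x y = adsB y x := by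
  unfold adsB
  exact Finset.sum_congr rfl fun i _ => by ring

theorem adsB_lin_right {q : ℕ} (a : ℝ) (x y z : Fin (q + 2) → ℝ) :
    adsB z (a • x + y) = a * adsB z x + adsB z y := by
  rw [adsB_symm, adsB_lin, adsB_symm x, adsB_symm y]

theorem adsB_smul_right {q : ℕ} (a : ℝ) (x z : Fin (q + 2) → ℝ) :
    adsB z (a • x) = a * adsB z x := by
  have h := adsB_lin_right a x 0 z
  have h0 : adsB z 0 = 0 := by simp [adsB]
  simpa [h0] using h

theorem adsQ_eq {q : ℕ} (x : Fin (q + 2) → ℝ) : adsQ x = adsB x x := by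
  unfold adsB adsQ
  exact Finset.sum_congr rfl fun i _ => by ring

theorem adsB_expand {q : ℕ} (x y : Fin (q + 2) → ℝ) :
    adsB x y = - (x 0 * y 0) - x 1 * y 1 + ∑ i : Fin q, x i.succ.succ * y i.succ.succ := by
  unfold adsB
  rw [Fin.sum_univ_succ, Fin.sum_univ_succ]
  simp
  ring

theorem adsB_nonneg {q : ℕ} (x : Fin (q + 2) → ℝ) (h0 : x 0 = 0) (h1 : x 1 = 0) :
    0 ≤ adsB x x := by
  rw [adsB_expand, h0, h1]
  have := Finset.sum_nonneg (s := Finset.univ)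
    (fun (i : Fin q) _ => mul_self_nonneg (x i.succ.succ))
  linarith

theorem ads_zero {q : ℕ} (x : Fin (q + 2) → ℝ) (h0 : x 0 = 0) (h1 : x 1 = 0)
    (h : adsB x x = 0) : x = 0 := by
  rw [adsB_expand, h0, h1] at h
  have h' : ∑ i : Fin q, x i.succ.succ * x i.succ.succ = 0 := by linarith
  rw [Finset.sum_eq_zero_iff_of_nonneg (fun i _ => mul_self_nonneg _)] at h'
  funext i
  refine Fin.cases h0 (fun j => ?_) i
  refine Fin.cases h1 (fun k => ?_) j
  exact mul_self_eq_zero.mp (h' k (Finset.mem_univ _))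

/-- Two lightlike hypersurfaces `H_u` and `H_v` of anti-de Sitter space are disjoint
if and only if `u` and `v` are orthogonal but not collinear. -/
theorem ads_hypersurfaces_disjoint_iff {q : ℕ} (hq : 2 ≤ q)
    (u v : Fin (q + 2) → ℝ) (hu : u ≠ 0) (hv : v ≠ 0)
    (hqu : adsQ u = 0) (hqv : adsQ v = 0) :
    adsH u ∩ adsH v = ∅ ↔ (adsB u v = 0 ∧ ¬ ∃ c : ℝ, v = c • u) := by
  rw [adsQ_eq] at hqu hqv
  have hpos : 0 < u 0 ^ 2 + u 1 ^ 2 := by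
    by_contra hn
    have h0 : u 0 = 0 := by nlinarith [sq_nonneg (u 0), sq_nonneg (u 1)]
    have h1 : u 1 = 0 := by nlinarith [sq_nonneg (u 0), sq_nonneg (u 1)]
    exact hu (ads_zero u h0 h1 hqu)
  constructor
  · intro hE
    -- a timelike vector orthogonal to both gives a common point
    have key : ∀ y, adsB u y = 0 → adsB v y = 0 → adsB y y < 0 → False := by
      intro y h1 h2 h3
      have hs : 0 < Real.sqrt (-adsB y y) := Real.sqrt_pos.mpr (by linarith)
      have hss := Real.mul_self_sqrt (show 0 ≤ -adsB y y by linarith)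
      set s := Real.sqrt (-adsB y y)
      have hm : s⁻¹ • y ∈ adsH u ∩ adsH v := by
        have hQ : adsQ (s⁻¹ • y) = -1 := by
          rw [adsQ_eq, adsB_smul_right, adsB_symm, adsB_smul_right,
            show adsB y y = -(s * s) by linarith]
          field_simp
        refine ⟨⟨hQ, ?_⟩, hQ, ?_⟩
        · rw [adsB_smul_right, h1, mul_zero]
        · rw [adsB_smul_right, h2, mul_zero]
      rw [hE] at hm
      exact hm
    obtain ⟨z, hz1, hz2⟩ : ∃ z, adsB u z = 0 ∧ adsB z z < 0 := by
      refine ⟨Fin.cons (-u 1) (Fin.cons (u 0) 0), ?_, ?_⟩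
      · rw [adsB_expand, show (1 : Fin (q + 2)) = Fin.succ 0 from rfl]
        simp
        ring
      · rw [adsB_expand, show (1 : Fin (q + 2)) = Fin.succ 0 from rfl]
        simp
        rw [show (1 : Fin (q + 2)) = Fin.succ 0 from rfl] at hpos
        simp at hpos
        nlinarith
    constructor
    · by_contra hb
      have hvu : adsB v u = adsB u v := adsB_symm _ _
      have hzu : adsB z u = 0 := by rw [adsB_symm]; exact hz1
      refine key ((-(adsB v z / adsB u v)) • u + z) ?_ ?_ ?_
      · rw [adsB_lin_right, hqu, hz1]; ring
      · rw [adsB_lin_right, hvu]; field_simp; ring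
      · rw [adsB_lin_right, adsB_lin, adsB_lin, hqu, hz1, hzu]; linarith
    · rintro ⟨c, rfl⟩
      exact key z hz1 (by rw [adsB_symm, adsB_smul_right, adsB_symm, hz1, mul_zero]) hz2
  · rintro ⟨hb, hc⟩
    have hvu : adsB v u = 0 := by rw [adsB_symm]; exact hb
    have hD : u 0 * v 1 - u 1 * v 0 ≠ 0 := by
      intro hD
      have main : ∀ a b : ℝ, a ≠ 0 → a * v 0 + b * u 0 = 0 → a * v 1 + b * u 1 = 0 → False := by
        intro a b ha h0 h1
        have hw := ads_zero (a • v + (b • u + 0)) (by simpa using h0) (by simpa using h1) (by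
          have h00 : ∀ w : Fin (q + 2) → ℝ, adsB w 0 = 0 := fun w => by simp [adsB]
          have h01 : ∀ w : Fin (q + 2) → ℝ, adsB 0 w = 0 := fun w => by simp [adsB]
          simp only [adsB_lin, adsB_lin_right, h00, h01, hqu, hqv, hb, hvu]
          ring)
        refine hc ⟨-b / a, ?_⟩
        funext i
        have := congrFun hw i
        simp at this
        simp
        field_simp
        linarith
      by_cases h0 : u 0 = 0
      · have h1 : u 1 ≠ 0 := by
          intro h1
          simp [h0, h1] at hpos
        exact main (u 1) (-v 1) h1 (by linarith) (by ring)
      · exact main (u 0) (-v 0) h0 (by ring) (by linarith)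
    ext x
    simp only [Set.mem_inter_iff, Set.mem_empty_iff_false, iff_false]
    rintro ⟨⟨hx, hux⟩, -, hvx⟩
    rw [adsQ_eq] at hx
    have hxu : adsB x u = 0 := by rw [adsB_symm]; exact hux
    have hxv : adsB x v = 0 := by rw [adsB_symm]; exact hvx
    set D := u 0 * v 1 - u 1 * v 0 with hDd
    have hn := adsB_nonneg ((-(x 0 * v 1 - x 1 * v 0)) • u +
      ((-(u 0 * x 1 - u 1 * x 0)) • v + (D • x + 0)))
      (by simp; rw [hDd]; ring) (by simp; rw [hDd]; ring)
    have h00 : ∀ w : Fin (q + 2) → ℝ, adsB w 0 = 0 := fun w => by simp [adsB]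
    have h01 : ∀ w : Fin (q + 2) → ℝ, adsB 0 w = 0 := fun w => by simp [adsB]
    simp only [adsB_lin, adsB_lin_right, h00, h01, hqu, hqv, hb, hvu, hx, hux, hvx, hxu, hxv] at hn
    have : 0 < D * D := mul_self_pos.mpr hD
    linarith
end

section
/- Let A be a linear map of ℝ^d preserving the standard Lorentz form q, and suppose A has three pairwise linearly independent nonzero isotropic eigenvectors X₁, X₂, X₃, with A Xᵢ = λᵢ Xᵢ. Then λ₁ = λ₂ = λ₃ and this common value is 1 or −1; in particular A acts as ± Identity on the linear span of X₁, X₂, X₃. -/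
theorem lorentzQ_comb {d : ℕ} (x y : Fin d → ℝ) (a b : ℝ) :
    lorentzQ (a • x + b • y) = a ^ 2 * lorentzQ x + b ^ 2 * lorentzQ y
      + a * b * (lorentzQ (x + y) - lorentzQ x - lorentzQ y) := by
  unfold lorentzQ
  simp only [← Finset.sum_sub_distrib, Finset.mul_sum, ← Finset.sum_add_distrib]
  refine Finset.sum_congr rfl fun i _ => ?_
  simp only [Pi.add_apply, Pi.smul_apply, smul_eq_mul]
  ring

theorem lorentzQ_zero_of {n : ℕ} (x : Fin (n + 1) → ℝ) (h0 : x 0 = 0)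
    (h : lorentzQ x = 0) : x = 0 := by
  unfold lorentzQ at h
  rw [Fin.sum_univ_succ] at h
  simp [h0] at h
  rw [Finset.sum_eq_zero_iff_of_nonneg (fun i _ => sq_nonneg _)] at h
  ext i
  refine Fin.cases h0 (fun j => ?_) i
  simpa using h j (Finset.mem_univ _)

theorem lorentzQ_add_ne {n : ℕ} (x y : Fin (n + 1) → ℝ) (hx : lorentzQ x = 0)
    (hy : lorentzQ y = 0) (hli : LinearIndependent ℝ ![x, y]) : lorentzQ (x + y) ≠ 0 := by
  intro h
  have h1 : y 0 • x + (-x 0) • y = 0 := by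
    apply lorentzQ_zero_of
    · simp only [Pi.add_apply, Pi.smul_apply, smul_eq_mul]; ring
    · rw [lorentzQ_comb, hx, hy, h]; ring
  have h2 := LinearIndependent.pair_iff.1 hli _ _ h1
  have hx0 : x = 0 := lorentzQ_zero_of x (by linarith [h2.2]) hx
  exact hli.ne_zero 0 hx0

/-- If a Lorentz transformation has three pairwise linearly independent nonzero
isotropic eigenvectors, then all three eigenvalues are equal to `1` or to `-1`, and
the transformation is `± Identity` on the span of the eigenvectors. -/
theorem lorentz_three_isotropic_eigenvectors {d : ℕ}
    (A : Matrix (Fin d) (Fin d) ℝ)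
    (hA : ∀ x : Fin d → ℝ, lorentzQ (A.mulVec x) = lorentzQ x)
    (X : Fin 3 → (Fin d → ℝ)) (lam : Fin 3 → ℝ)
    (hX : ∀ i, X i ≠ 0) (hq : ∀ i, lorentzQ (X i) = 0)
    (hpair : ∀ i j, i ≠ j → LinearIndependent ℝ ![X i, X j])
    (heig : ∀ i, A.mulVec (X i) = lam i • X i) :
    lam 0 = lam 1 ∧ lam 1 = lam 2 ∧ (lam 0 = 1 ∨ lam 0 = -1) ∧
      ∀ w ∈ Submodule.span ℝ (Set.range X), A.mulVec w = lam 0 • w := by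
  have hd : ∃ n, d = n + 1 := by
    rcases d with _ | n
    · exact absurd (Subsingleton.elim _ _) (hX 0)
    · exact ⟨n, rfl⟩
  obtain ⟨n, rfl⟩ := hd
  have key : ∀ i j, i ≠ j → lam i * lam j = 1 := by
    intro i j hij
    have hne := lorentzQ_add_ne _ _ (hq i) (hq j) (hpair i j hij)
    have h := hA (X i + X j)
    rw [Matrix.mulVec_add, heig, heig, lorentzQ_comb, hq, hq] at h
    apply mul_right_cancel₀ hne
    linarith
  have h01 := key 0 1 (by decide)
  have h02 := key 0 2 (by decide)
  have h12 := key 1 2 (by decide)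
  have e01 : lam 0 = lam 1 := by linear_combination lam 0 * (-h12) + lam 1 * h02
  have e12 : lam 1 = lam 2 := by linear_combination lam 1 * (-h02) + lam 2 * h01
  refine ⟨e01, e12, ?_, ?_⟩
  · rw [← e01] at h01
    exact mul_self_eq_one_iff.1 h01
  · intro w hw
    induction hw using Submodule.span_induction with
    | mem x hx =>
      obtain ⟨i, rfl⟩ := hx
      rw [heig]
      have : lam i = lam 0 := by
        fin_cases i
        · rfl
        · exact e01.symm
        · exact (e01.trans e12).symm
      rw [this]
    | zero => simp
    | add x y _ _ hx hy => rw [Matrix.mulVec_add, hx, hy, smul_add]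
    | smul a x _ hx => rw [Matrix.mulVec_smul, hx, smul_comm]
end
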